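/- For all real q, ρ with |q| < 1 and |ρ| < 1, every y ∈ S(q), and every integer n ≥ 1, one has ∫_{S(q)} H_n(x|q)·f_CN(x|y,ρ,q) dx = ρⁿ·H_n(y|q). -/

import Mathlib

noncomputable section

open Finset

/-- The q-integer `[n]_q = 1 + q + ⋯ + q^{n-1}`. -/
def qInt (q : ℝ) (n : ℕ) : ℝ := ∑ i ∈ Finset.range n, q ^ i

/-- The q-factorial `[n]_q!`. -/
def qFact (q : ℝ) (n : ℕ) : ℝ := ∏ j ∈ Finset.range n, qInt q (j + 1)

/-- The q-binomial coefficient. -/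
def qBinom (q : ℝ) (n k : ℕ) : ℝ :=
  if k ≤ n then qFact q n / (qFact q (n - k) * qFact q k) else 0

/-- The finite q-Pochhammer symbol `(a;q)_n`. -/
def qPoch (a q : ℝ) (n : ℕ) : ℝ := ∏ j ∈ Finset.range n, (1 - a * q ^ j)

/-- The infinite q-Pochhammer symbol `(a;q)_∞`. -/
def qPochInf (a q : ℝ) : ℝ := ∏' j : ℕ, (1 - a * q ^ j)

/-- The q-Hermite polynomials `H_n(x|q)`. -/
def qHermite (q : ℝ) : ℕ → ℝ → ℝ
  | 0, _ => 1
  | 1, x => x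
  | n + 2, x => x * qHermite q (n + 1) x - qInt q (n + 1) * qHermite q n x

/-- The rescaled q-ultraspherical polynomials `R_n(x|β,q)`. -/
def qUltra (q β : ℝ) : ℕ → ℝ → ℝ
  | 0, _ => 1
  | 1, x => (1 - β) * x
  | n + 2, x => (1 - β * q ^ (n + 1)) * x * qUltra q β (n + 1) x
      - (1 - β ^ 2 * q ^ n) * qInt q (n + 1) * qUltra q β n x

/-- The Al-Salam–Chihara polynomials `P_n(x|y,ρ,q)`. -/
def ASC (q y ρ : ℝ) : ℕ → ℝ → ℝ
  | 0, _ => 1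
  | 1, x => x - ρ * y
  | n + 2, x => (x - ρ * y * q ^ (n + 1)) * ASC q y ρ (n + 1) x
      - (1 - ρ ^ 2 * q ^ n) * qInt q (n + 1) * ASC q y ρ n x

/-- The polynomials `B_n(y|q)` (q⁻¹-Hermite related). -/
def qB (q : ℝ) : ℕ → ℝ → ℝ
  | 0, _ => 1
  | 1, y => -y
  | n + 2, y => -q ^ (n + 1) * y * qB q (n + 1) y + q ^ n * qInt q (n + 1) * qB q n y

/-- The big q-Hermite polynomials `H_n(x|a,q)`. -/
def bigqHermite (q a : ℝ) : ℕ → ℝ → ℝ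
  | 0, _ => 1
  | 1, x => x - a
  | n + 2, x => (x - a * q ^ (n + 1)) * bigqHermite q a (n + 1) x
      - qInt q (n + 1) * bigqHermite q a n x

/-- The probabilistic Hermite polynomials `H_n(x)`. -/
def probHermite : ℕ → ℝ → ℝ
  | 0, _ => 1
  | 1, x => x
  | n + 2, x => x * probHermite (n + 1) x - (n + 1) * probHermite n x

/-- The probabilistic Hermite polynomials on ℂ. -/
def probHermiteC : ℕ → ℂ → ℂ
  | 0, _ => 1
  | 1, x => x
  | n + 2, x => x * probHermiteC (n + 1) x - (n + 1) * probHermiteC n x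

/-- The Chebyshev polynomials of the second kind. -/
def chebU : ℕ → ℝ → ℝ
  | 0, _ => 1
  | 1, x => 2 * x
  | n + 2, x => 2 * x * chebU (n + 1) x - chebU n x

/-- The Chebyshev polynomials of the first kind. -/
def chebT : ℕ → ℝ → ℝ
  | 0, _ => 1
  | 1, x => x
  | n + 2, x => 2 * x * chebT (n + 1) x - chebT n x

/-- `W_k(x,y,t|q)`. -/
def Wk (q x y t : ℝ) (k : ℕ) : ℝ :=
  (1 - t ^ 2 * q ^ (2 * k)) ^ 2 - (1 - q) * x * y * t * q ^ k * (1 + t ^ 2 * q ^ (2 * k))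
    + (1 - q) * t ^ 2 * q ^ (2 * k) * (x ^ 2 + y ^ 2)

/-- `V_k(x,a|q)`. -/
def Vk (q x a : ℝ) (k : ℕ) : ℝ :=
  1 - (1 - q) * a * x * q ^ k + (1 - q) * a ^ 2 * q ^ (2 * k)

/-- `L_k(x,a|q)`. -/
def Lk (q x a : ℝ) (k : ℕ) : ℝ :=
  (1 + a * q ^ k) ^ 2 - (1 - q) * x ^ 2 * a ^ 2 * q ^ k

/-- The support interval `S(q) = [-2/√(1-q), 2/√(1-q)]` for `|q| < 1`. -/
def Sq (q : ℝ) : Set ℝ := Set.Icc (-(2 / Real.sqrt (1 - q))) (2 / Real.sqrt (1 - q))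

open MeasureTheory

open Classical in
/-- The q-Normal density `f_N(x|q)` (zero outside `S(q)`). -/
def fN (q x : ℝ) : ℝ :=
  if x ∈ Sq q then
    qPochInf q q * Real.sqrt (1 - q) * (∏' j : ℕ, Lk q x 1 j) /
      (2 * Real.pi * Real.sqrt (Lk q x 1 0))
  else 0

/-- The Al-Salam–Chihara (conditional) density `f_CN(x|y,ρ,q)`. -/
def fCN (q y ρ x : ℝ) : ℝ :=
  fN q x * qPochInf (ρ ^ 2) q / ∏' k : ℕ, Wk q x y ρ k

open Filter Topology

/-! ### Finite and infinite q-Pochhammer symbols -/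

lemma qPoch_succ (a q : ℝ) (n : ℕ) : qPoch a q (n + 1) = qPoch a q n * (1 - a * q ^ n) :=
  prod_range_succ _ _

lemma qPoch_self_succ (q : ℝ) (n : ℕ) : qPoch q q (n + 1) = qPoch q q n * (1 - q ^ (n + 1)) := by
  rw [qPoch_succ, pow_succ']

lemma one_sub_mul_pow_pos {a q : ℝ} (ha : |a| < 1) (hq : |q| < 1) (n : ℕ) :
    0 < 1 - a * q ^ n := by
  have h : |a * q ^ n| < 1 := by
    rw [abs_mul, abs_pow]
    exact mul_lt_one_of_nonneg_of_lt_one_left (abs_nonneg a) ha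
      (pow_le_one₀ (abs_nonneg q) hq.le)
  linarith [le_abs_self (a * q ^ n)]

lemma one_sub_pow_succ_pos {q : ℝ} (hq : |q| < 1) (n : ℕ) : 0 < 1 - q ^ (n + 1) := by
  simpa only [pow_succ'] using one_sub_mul_pow_pos hq hq n

lemma one_add_pow_succ_pos {q : ℝ} (hq : |q| < 1) (n : ℕ) : 0 < 1 + q ^ (n + 1) := by
  have h := one_sub_mul_pow_pos (a := -q) (by rwa [abs_neg]) hq n
  rw [pow_succ']
  linarith

lemma qPoch_pos {a q : ℝ} (ha : |a| < 1) (hq : |q| < 1) (n : ℕ) : 0 < qPoch a q n :=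
  prod_pos fun j _ => one_sub_mul_pow_pos ha hq j

lemma summable_norm_neg_mul_pow (a : ℝ) {q : ℝ} (hq : |q| < 1) :
    Summable fun j : ℕ => ‖-(a * q ^ j)‖ := by
  simpa [abs_mul, abs_pow] using
    (summable_geometric_of_lt_one (abs_nonneg q) hq).mul_left |a|

lemma tendsto_qPoch (a : ℝ) {q : ℝ} (hq : |q| < 1) :
    Tendsto (qPoch a q) atTop (𝓝 (qPochInf a q)) := by
  have h := multipliable_one_add_of_summable (summable_norm_neg_mul_pow a hq)
  have h' := h.hasProd.tendsto_prod_nat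
  simp only [← sub_eq_add_neg] at h'
  exact h'

lemma qPochInf_ne_zero {a q : ℝ} (ha : |a| < 1) (hq : |q| < 1) : qPochInf a q ≠ 0 := by
  have h := tprod_one_add_ne_zero_of_summable (f := fun j : ℕ => -(a * q ^ j))
    (fun j => by simpa only [← sub_eq_add_neg] using (one_sub_mul_pow_pos ha hq j).ne')
    (summable_norm_neg_mul_pow a hq)
  simpa only [qPochInf, sub_eq_add_neg] using h

lemma exists_inv_qPoch_le {q : ℝ} (hq : |q| < 1) : ∃ C, ∀ n, (qPoch q q n)⁻¹ ≤ C := by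
  obtain ⟨C, hC⟩ := ((tendsto_qPoch q hq).inv₀ (qPochInf_ne_zero hq hq)).bddAbove_range
  exact ⟨C, fun n => hC ⟨n, rfl⟩⟩

/-! ### Continuous q-Hermite polynomials in the variable `x = 2 cos θ` -/

/-- The continuous q-Hermite polynomials of Rogers, as polynomials in `x = 2 cos θ`. -/
def rogersH (q : ℝ) : ℕ → ℝ → ℝ
  | 0, _ => 1
  | 1, x => x
  | n + 2, x => x * rogersH q (n + 1) x - (1 - q ^ (n + 1)) * rogersH q n x

lemma rogersH_add_two (q x : ℝ) (n : ℕ) :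
    rogersH q (n + 2) x = x * rogersH q (n + 1) x - (1 - q ^ (n + 1)) * rogersH q n x := by
  rw [rogersH]

/-- The three-term recurrence, valid for `n = 0` as the last coefficient vanishes. -/
lemma mul_rogersH (q x : ℝ) (n : ℕ) :
    x * rogersH q n x = rogersH q (n + 1) x + (1 - q ^ n) * rogersH q (n - 1) x := by
  cases n with
  | zero => simp [rogersH]
  | succ n => rw [rogersH_add_two, Nat.add_sub_cancel]; ring

lemma one_sub_mul_qInt (q : ℝ) (n : ℕ) : (1 - q) * qInt q n = 1 - q ^ n :=
  mul_neg_geom_sum q n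

lemma rogersH_mul_eq_pow_mul_qHermite {q s : ℝ} (hs : s ^ 2 = 1 - q) (x : ℝ) (n : ℕ) :
    rogersH q n (s * x) = s ^ n * qHermite q n x := by
  induction n using Nat.twoStepInduction with
  | zero => simp [rogersH, qHermite]
  | one => simp [rogersH, qHermite]
  | more n ih₀ ih₁ =>
    rw [rogersH_add_two, qHermite, ih₀, ih₁, ← one_sub_mul_qInt, ← hs]
    ring

lemma rogersH_neg (q x : ℝ) (n : ℕ) : rogersH q n (-x) = (-1) ^ n * rogersH q n x := by
  induction n using Nat.twoStepInduction with
  | zero => simp [rogersH]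
  | one => simp [rogersH]
  | more n ih₀ ih₁ =>
    rw [rogersH_add_two, rogersH_add_two, ih₀, ih₁]
    ring

lemma continuous_rogersH (q : ℝ) (n : ℕ) : Continuous (rogersH q n) := by
  induction n using Nat.twoStepInduction with
  | zero => exact continuous_const
  | one => exact continuous_id
  | more n ih₀ ih₁ =>
    have h : rogersH q (n + 2) =
        fun x => x * rogersH q (n + 1) x - (1 - q ^ (n + 1)) * rogersH q n x :=
      funext fun x => rogersH_add_two q x n
    rw [h]
    fun_prop

/-- The values `rogersH q n x` grow at most linearly in `n` on `[-2, 2]`. The proof factors the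
recurrence through `d n = rogersH q (n + 1) x - z * rogersH q n x`, where `x = z + z̄`, `|z| = 1`. -/
lemma exists_abs_rogersH_le {q : ℝ} (hq : |q| < 1) :
    ∃ C, 0 ≤ C ∧ ∀ n : ℕ, ∀ x : ℝ, |x| ≤ 2 → |rogersH q n x| ≤ C * (n + 1) := by
  let D : ℕ → ℝ := fun n => ∏ k ∈ range n, (1 + ((k : ℝ) + 1) * |q| ^ (k + 1))
  have hsum : Summable fun k : ℕ => ((k : ℝ) + 1) * |q| ^ (k + 1) := by
    have h := summable_pow_mul_geometric_of_norm_lt_one (R := ℝ) 1 (r := |q|) (by simpa using hq)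
    simpa using (summable_nat_add_iff 1).2 h
  have hD_le : ∀ n, D n ≤ Real.exp (∑' k : ℕ, ((k : ℝ) + 1) * |q| ^ (k + 1)) := fun n =>
    (Real.prod_one_add_le_exp_sum _ fun k => by positivity).trans
      (Real.exp_le_exp.2 (hsum.sum_le_tsum _ fun k _ => by positivity))
  have hD_pos : ∀ n, 0 < D n := fun n => prod_pos fun k _ => by positivity
  refine ⟨Real.exp (∑' k : ℕ, ((k : ℝ) + 1) * |q| ^ (k + 1)), (Real.exp_pos _).le, fun n x hx => ?_⟩
  suffices h : |rogersH q n x| ≤ D n * (n + 1) from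
    h.trans (mul_le_mul_of_nonneg_right (hD_le n) (by positivity))
  obtain ⟨z, w, hz, hw, hzw, hx'⟩ :
      ∃ z w : ℂ, ‖z‖ = 1 ∧ ‖w‖ = 1 ∧ z * w = 1 ∧ (x : ℂ) = z + w := by
    have hx2 := abs_le.1 hx
    refine ⟨Complex.exp (Real.arccos (x / 2) * Complex.I),
      Complex.exp (-Real.arccos (x / 2) * Complex.I), Complex.norm_exp_ofReal_mul_I _, ?_, ?_, ?_⟩
    · exact_mod_cast Complex.norm_exp_ofReal_mul_I (-Real.arccos (x / 2))
    · rw [← Complex.exp_add]; simp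
    · rw [← Complex.two_cos, ← Complex.ofReal_cos,
        Real.cos_arccos (by linarith) (by linarith)]
      push_cast
      ring
  suffices h : ‖(rogersH q (n + 1) x : ℂ) - z * rogersH q n x‖ ≤ D n ∧
      |rogersH q n x| ≤ D n * (n + 1) from h.2
  induction n with
  | zero =>
    have h0 : (x : ℂ) - z = w := by rw [hx']; ring
    simp [rogersH, D, h0, hw]
  | succ n ih =>
    obtain ⟨ih₀, ih₁⟩ := ih
    have hDs : D (n + 1) = D n * (1 + ((n : ℝ) + 1) * |q| ^ (n + 1)) := prod_range_succ _ _
    have hpow : 0 ≤ |q| ^ (n + 1) := by positivity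
    have hle : D n ≤ D (n + 1) := by
      rw [hDs]
      exact le_mul_of_one_le_right (hD_pos n).le (by nlinarith [(n.cast_nonneg : (0 : ℝ) ≤ n)])
    constructor
    · have key : (rogersH q (n + 2) x : ℂ) - z * rogersH q (n + 1) x =
          w * (rogersH q (n + 1) x - z * rogersH q n x) + (q : ℂ) ^ (n + 1) * rogersH q n x := by
        rw [rogersH_add_two]
        push_cast
        rw [hx']
        linear_combination (rogersH q n x : ℂ) * hzw
      rw [key]
      refine (norm_add_le _ _).trans ?_
      rw [norm_mul, norm_mul, hw, one_mul, norm_pow, Complex.norm_real, Complex.norm_real,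
        Real.norm_eq_abs, Real.norm_eq_abs, hDs]
      nlinarith [mul_le_mul_of_nonneg_left ih₁ hpow]
    · have key : (rogersH q (n + 1) x : ℂ) =
          (rogersH q (n + 1) x - z * rogersH q n x) + z * rogersH q n x := by ring
      have h : |rogersH q (n + 1) x| ≤ D n + D n * (n + 1) := by
        rw [← Real.norm_eq_abs, ← Complex.norm_real, key]
        refine (norm_add_le _ _).trans (add_le_add ih₀ ?_)
        rwa [norm_mul, hz, one_mul, Complex.norm_real]
      push_cast
      nlinarith [(n.cast_nonneg : (0 : ℝ) ≤ n)]

/-! ### The Poisson–Mehler expansion -/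

/-- The coefficient of `t ^ n` in the Poisson–Mehler series. -/
def mehlerCoeff (q x y : ℝ) (n : ℕ) : ℝ := rogersH q n x * rogersH q n y / qPoch q q n

/-- The `k = 0` factor `W_0` of the Poisson–Mehler denominator, with `x = 2 cos θ`,
`y = 2 cos φ`. -/
def mehlerFactor (x y t : ℝ) : ℝ :=
  (1 - t ^ 2) ^ 2 - x * y * t * (1 + t ^ 2) + t ^ 2 * (x ^ 2 + y ^ 2)

/-- Right shift of a sequence, with `0` in front. -/
def shiftRight (f : ℕ → ℝ) : ℕ → ℝ
  | 0 => 0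
  | n + 1 => f n

lemma HasSum.shiftRight {f : ℕ → ℝ} {s : ℝ} (h : HasSum f s) : HasSum (shiftRight f) s := by
  rw [← hasSum_nat_add_iff' 1]
  simpa [_root_.shiftRight] using h

lemma exists_abs_mehlerCoeff_le {q : ℝ} (hq : |q| < 1) :
    ∃ C, 0 ≤ C ∧ ∀ n : ℕ, ∀ x y : ℝ, |x| ≤ 2 → |y| ≤ 2 →
      |mehlerCoeff q x y n| ≤ C * ((n : ℝ) + 1) ^ 2 := by
  obtain ⟨C, hC, hH⟩ := exists_abs_rogersH_le hq
  obtain ⟨P, hP⟩ := exists_inv_qPoch_le hq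
  have hP0 : 0 ≤ P := (inv_nonneg.2 (qPoch_pos hq hq 0).le).trans (hP 0)
  refine ⟨C * C * P, by positivity, fun n x y hx hy => ?_⟩
  rw [mehlerCoeff, div_eq_mul_inv, abs_mul, abs_mul, abs_of_pos (inv_pos.2 (qPoch_pos hq hq n))]
  calc |rogersH q n x| * |rogersH q n y| * (qPoch q q n)⁻¹
      ≤ (C * (n + 1)) * (C * (n + 1)) * P := by
        have := hP n
        have := hH n x hx
        have := hH n y hy
        have := (inv_pos.2 (qPoch_pos hq hq n)).le
        gcongr
    _ = C * C * P * ((n : ℝ) + 1) ^ 2 := by ring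

lemma summable_add_one_pow_mul_pow (k : ℕ) {r : ℝ} (hr : |r| < 1) :
    Summable fun n : ℕ => ((n : ℝ) + 1) ^ k * |r| ^ n := by
  rcases eq_or_ne r 0 with rfl | h0
  · refine summable_of_ne_finset_zero (s := {0}) fun n hn => ?_
    have : n ≠ 0 := by simpa using hn
    simp [this]
  · have h := summable_pow_mul_geometric_of_norm_lt_one (R := ℝ) k (r := |r|) (by simpa using hr)
    have h' := ((summable_nat_add_iff 1).2 h).mul_right |r|⁻¹
    refine h'.congr fun n => ?_
    have : |r| ≠ 0 := abs_ne_zero.2 h0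
    push_cast
    rw [pow_succ, ← mul_assoc, mul_inv_cancel_right₀ this]

lemma summable_mehler {q x y t : ℝ} (hq : |q| < 1) (hx : |x| ≤ 2) (hy : |y| ≤ 2) (ht : |t| < 1) :
    Summable fun n => mehlerCoeff q x y n * t ^ n := by
  obtain ⟨C, -, hC⟩ := exists_abs_mehlerCoeff_le hq
  refine Summable.of_norm_bounded ((summable_add_one_pow_mul_pow 2 ht).mul_left C) fun n => ?_
  rw [norm_mul, norm_pow, Real.norm_eq_abs, Real.norm_eq_abs, ← mul_assoc]
  exact mul_le_mul_of_nonneg_right (hC n x y hx hy) (by positivity)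

lemma mehlerCoeff_one {q : ℝ} (x y : ℝ) (hq : |q| < 1) :
    (1 - q) * mehlerCoeff q x y 1 - x * y * mehlerCoeff q x y 0 = 0 := by
  have h1 : 1 - q ≠ 0 := by simpa using (one_sub_pow_succ_pos hq 0).ne'
  simp only [mehlerCoeff, rogersH, qPoch, prod_range_zero, prod_range_one, pow_zero, mul_one]
  field_simp
  ring

lemma mehlerCoeff_two {q : ℝ} (x y : ℝ) (hq : |q| < 1) :
    (1 - q ^ 2) * mehlerCoeff q x y 2 - x * y * mehlerCoeff q x y 1 +
      (x ^ 2 + y ^ 2 - 2 + (1 + q)) * mehlerCoeff q x y 0 = 0 := by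
  have h1 : 1 - q ≠ 0 := by simpa using (one_sub_pow_succ_pos hq 0).ne'
  have h2 : 1 - q ^ 2 ≠ 0 := (one_sub_pow_succ_pos hq 1).ne'
  simp only [mehlerCoeff, rogersH, qPoch, prod_range_succ, prod_range_zero, mul_one,
    one_mul, zero_add, pow_one, ← pow_succ']
  field_simp
  ring

lemma mehlerCoeff_three {q : ℝ} (x y : ℝ) (hq : |q| < 1) :
    (1 - q ^ 3) * mehlerCoeff q x y 3 - x * y * mehlerCoeff q x y 2 +
      (x ^ 2 + y ^ 2 - 2 + (1 + q) * q) * mehlerCoeff q x y 1 - x * y * mehlerCoeff q x y 0 = 0 := by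
  have h1 : 1 - q ≠ 0 := by simpa using (one_sub_pow_succ_pos hq 0).ne'
  have h2 : 1 - q ^ 2 ≠ 0 := (one_sub_pow_succ_pos hq 1).ne'
  have h3 : 1 - q ^ 3 ≠ 0 := (one_sub_pow_succ_pos hq 2).ne'
  simp only [mehlerCoeff, rogersH, qPoch, prod_range_succ, prod_range_zero, mul_one,
    one_mul, zero_add, pow_one, ← pow_succ', Nat.reduceAdd]
  field_simp
  ring

/-- The fourth-order recurrence satisfied by the products `rogersH q n x * rogersH q n y`. -/
lemma mehlerCoeff_add_four {q : ℝ} (x y : ℝ) (hq : |q| < 1) (n : ℕ) :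
    (1 - q ^ (n + 4)) * mehlerCoeff q x y (n + 4) - x * y * mehlerCoeff q x y (n + 3) +
      (x ^ 2 + y ^ 2 - 2 + (1 + q) * q ^ (n + 2)) * mehlerCoeff q x y (n + 2) -
      x * y * mehlerCoeff q x y (n + 1) + (1 - q ^ (n + 1)) * mehlerCoeff q x y n = 0 := by
  have hp := (qPoch_pos hq hq n).ne'
  have h1 := (one_sub_pow_succ_pos hq n).ne'
  have h2 := (one_sub_pow_succ_pos hq (n + 1)).ne'
  have h3 := (one_sub_pow_succ_pos hq (n + 2)).ne'
  have h4 := (one_sub_pow_succ_pos hq (n + 3)).ne'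
  simp only [mehlerCoeff, rogersH_add_two, qPoch_self_succ, add_assoc, Nat.reduceAdd] at *
  field_simp
  ring

/-- Multiplying the Poisson–Mehler series at `t` by its first denominator factor gives, up to an
explicit constant, the series at `q * t`. -/
lemma mehlerFactor_mul_tsum {q x y t : ℝ} (hq : |q| < 1) (hx : |x| ≤ 2) (hy : |y| ≤ 2)
    (ht : |t| < 1) :
    mehlerFactor x y t * ∑' n, mehlerCoeff q x y n * t ^ n =
      (1 - t ^ 2) * (1 - t ^ 2 * q) * ∑' n, mehlerCoeff q x y n * (q * t) ^ n := by
  have hqt : |q * t| < 1 := by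
    rw [abs_mul]
    exact mul_lt_one_of_nonneg_of_lt_one_left (abs_nonneg q) hq ht.le
  set a : ℕ → ℝ := fun n => mehlerCoeff q x y n * t ^ n with ha
  set b : ℕ → ℝ := fun n => mehlerCoeff q x y n * (q * t) ^ n with hb
  have hA : HasSum a (∑' n, a n) := (summable_mehler hq hx hy ht).hasSum
  have hB : HasSum b (∑' n, b n) := (summable_mehler hq hx hy hqt).hasSum
  have h1 := (((hA.add (hA.shiftRight.mul_left (-(x * y * t)))).add
    (hA.shiftRight.shiftRight.mul_left ((x ^ 2 + y ^ 2 - 2) * t ^ 2))).add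
    (hA.shiftRight.shiftRight.shiftRight.mul_left (-(x * y * t ^ 3)))).add
    (hA.shiftRight.shiftRight.shiftRight.shiftRight.mul_left (t ^ 4))
  have h2 := (hB.add (hB.shiftRight.shiftRight.mul_left (-((1 + q) * t ^ 2)))).add
    (hB.shiftRight.shiftRight.shiftRight.shiftRight.mul_left (q * t ^ 4))
  have hcoeff : ∀ n, a n + -(x * y * t) * shiftRight a n +
        (x ^ 2 + y ^ 2 - 2) * t ^ 2 * shiftRight (shiftRight a) n +
        -(x * y * t ^ 3) * shiftRight (shiftRight (shiftRight a)) n +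
        t ^ 4 * shiftRight (shiftRight (shiftRight (shiftRight a))) n =
      b n + -((1 + q) * t ^ 2) * shiftRight (shiftRight b) n +
        q * t ^ 4 * shiftRight (shiftRight (shiftRight (shiftRight b))) n := by
    rintro (_ | _ | _ | _ | n)
    · simp [shiftRight, ha, hb]
    · simp only [shiftRight, ha, hb]
      linear_combination t * mehlerCoeff_one x y hq
    · simp only [shiftRight, ha, hb]
      linear_combination t ^ 2 * mehlerCoeff_two x y hq
    · simp only [shiftRight, ha, hb]
      linear_combination t ^ 3 * mehlerCoeff_three x y hq
    · simp only [shiftRight, ha, hb]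
      linear_combination t ^ (n + 4) * mehlerCoeff_add_four x y hq n
  have key := h1.unique ((funext hcoeff).symm ▸ h2)
  rw [mehlerFactor]
  linear_combination key

lemma mehlerFactor_prod_mul_tsum {q x y t : ℝ} (hq : |q| < 1) (hx : |x| ≤ 2) (hy : |y| ≤ 2)
    (ht : |t| < 1) (N : ℕ) :
    (∏ k ∈ range N, mehlerFactor x y (t * q ^ k)) * ∑' n, mehlerCoeff q x y n * t ^ n =
      qPoch (t ^ 2) q (2 * N) * ∑' n, mehlerCoeff q x y n * (t * q ^ N) ^ n := by
  induction N with
  | zero => simp [qPoch]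
  | succ N ih =>
    have htq : |t * q ^ N| < 1 := by
      rw [abs_mul, abs_pow]
      exact mul_lt_one_of_nonneg_of_lt_one_left (abs_nonneg t) ht
        (pow_le_one₀ (abs_nonneg q) hq.le)
    have h := mehlerFactor_mul_tsum hq hx hy htq
    rw [prod_range_succ, mul_right_comm, ih, mul_right_comm, mul_assoc, h,
      mul_add_one, qPoch_succ, qPoch_succ, show q * (t * q ^ N) = t * q ^ (N + 1) by ring]
    ring

lemma summable_norm_mehlerFactor_sub_one {q : ℝ} (x y t : ℝ) (hq : |q| < 1) :
    Summable fun k : ℕ => ‖mehlerFactor x y (t * q ^ k) - 1‖ := by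
  have hg : Summable fun k : ℕ => ‖q ^ k‖ := by
    simpa [abs_pow] using summable_geometric_of_lt_one (abs_nonneg q) hq
  have hpow : ∀ j : ℕ, Summable fun k : ℕ => (q ^ k) ^ (j + 1) := fun j => by
    refine Summable.of_norm_bounded hg fun k => ?_
    rw [norm_pow]
    refine pow_le_of_le_one (norm_nonneg _) ?_ j.succ_ne_zero
    rw [norm_pow]
    exact pow_le_one₀ (norm_nonneg q) hq.le
  refine Summable.norm ((((hpow 1).mul_left ((x ^ 2 + y ^ 2 - 2) * t ^ 2)).add
    ((hpow 3).mul_left (t ^ 4))).sub (((hpow 0).mul_left (x * y * t)).add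
    ((hpow 2).mul_left (x * y * t ^ 3))) |>.congr fun k => ?_)
  rw [mehlerFactor]
  ring

lemma multipliable_mehlerFactor {q : ℝ} (x y t : ℝ) (hq : |q| < 1) :
    Multipliable fun k : ℕ => mehlerFactor x y (t * q ^ k) := by
  simpa using multipliable_one_add_of_summable (summable_norm_mehlerFactor_sub_one x y t hq)

lemma tendsto_tsum_mehler {q x y t : ℝ} (hq : |q| < 1) (hx : |x| ≤ 2) (hy : |y| ≤ 2)
    (ht : |t| < 1) :
    Tendsto (fun N : ℕ => ∑' n, mehlerCoeff q x y n * (t * q ^ N) ^ n) atTop (𝓝 1) := by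
  have h0 : ∑' n, mehlerCoeff q x y n * (0 : ℝ) ^ n = 1 := by
    rw [tsum_eq_single 0 fun n hn => by simp [hn]]
    simp [mehlerCoeff, rogersH, qPoch]
  rw [← h0]
  refine tendsto_tsum_of_dominated_convergence (summable_mehler hq hx hy ht).norm (fun n => ?_)
    (Eventually.of_forall fun N n => ?_)
  · have h : Tendsto (fun N : ℕ => t * q ^ N) atTop (𝓝 0) := by
      simpa using (tendsto_pow_atTop_nhds_zero_of_abs_lt_one hq).const_mul t
    exact (h.pow n).const_mul _
  · rw [norm_mul, norm_mul, norm_pow, norm_pow, norm_mul, norm_pow]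
    gcongr
    exact mul_le_of_le_one_right (norm_nonneg t) (pow_le_one₀ (norm_nonneg q) hq.le)

/-- The Poisson–Mehler formula. -/
lemma hasSum_mehler {q x y t : ℝ} (hq : |q| < 1) (hx : |x| ≤ 2) (hy : |y| ≤ 2) (ht : |t| < 1) :
    HasSum (fun n => mehlerCoeff q x y n * t ^ n)
      (qPochInf (t ^ 2) q / ∏' k : ℕ, mehlerFactor x y (t * q ^ k)) := by
  have h1 := ((multipliable_mehlerFactor x y t hq).hasProd.tendsto_prod_nat).mul_const
    (∑' n, mehlerCoeff q x y n * t ^ n)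
  have h2 := ((tendsto_qPoch (t ^ 2) hq).comp (tendsto_id.const_mul_atTop' two_pos)).mul
    (tendsto_tsum_mehler hq hx hy ht)
  have h := tendsto_nhds_unique h1 (h2.congr fun N =>
    (mehlerFactor_prod_mul_tsum hq hx hy ht N).symm)
  rw [mul_one] at h
  have hne : qPochInf (t ^ 2) q ≠ 0 :=
    qPochInf_ne_zero (by rw [abs_pow]; exact pow_lt_one₀ (abs_nonneg t) ht two_ne_zero) hq
  have hW : ∏' k : ℕ, mehlerFactor x y (t * q ^ k) ≠ 0 := by
    rintro h0
    rw [h0, zero_mul] at h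
    exact hne h.symm
  rw [← h, mul_div_cancel_left₀ _ hW]
  exact (summable_mehler hq hx hy ht).hasSum

/-! ### Fourier coefficients of the continuous q-Hermite polynomials -/

/-- The reciprocal of `(q;q)_j`, extended by `0` to negative `j`. -/
def invQPoch (q : ℝ) (j : ℤ) : ℝ := if 0 ≤ j then (qPoch q q j.toNat)⁻¹ else 0

lemma invQPoch_natCast (q : ℝ) (n : ℕ) : invQPoch q n = (qPoch q q n)⁻¹ := by
  simp [invQPoch]

lemma invQPoch_of_neg (q : ℝ) {j : ℤ} (hj : j < 0) : invQPoch q j = 0 :=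
  if_neg (not_le.2 hj)

lemma invQPoch_zero (q : ℝ) : invQPoch q 0 = 1 := by
  simp [invQPoch, qPoch]

lemma invQPoch_sub_one {q : ℝ} (hq : |q| < 1) (n : ℕ) :
    invQPoch q (n - 1) = (1 - q ^ n) * invQPoch q n := by
  cases n with
  | zero => simp [invQPoch]
  | succ n =>
    have h := (one_sub_pow_succ_pos hq n).ne'
    have h' := (qPoch_pos hq hq n).ne'
    rw [Nat.cast_succ, add_sub_cancel_right, ← Nat.cast_succ, invQPoch_natCast, invQPoch_natCast,
      Nat.succ_eq_add_one, qPoch_self_succ]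
    field_simp

lemma invQPoch_mul_invQPoch {q : ℝ} (hq : |q| < 1) {i j : ℤ} {n : ℕ} (hij : i + j = n) :
    (1 - q ^ n) * (invQPoch q i * invQPoch q j) =
      invQPoch q i * invQPoch q (j - 1) + invQPoch q (i - 1) * invQPoch q j -
        invQPoch q (i - 1) * invQPoch q (j - 1) := by
  rcases lt_or_ge i 0 with hi | hi
  · simp [invQPoch_of_neg q hi, invQPoch_of_neg q (show i - 1 < 0 by omega)]
  rcases lt_or_ge j 0 with hj | hj
  · simp [invQPoch_of_neg q hj, invQPoch_of_neg q (show j - 1 < 0 by omega)]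
  lift i to ℕ using hi
  lift j to ℕ using hj
  have hn : n = i + j := by exact_mod_cast hij.symm
  rw [invQPoch_sub_one hq, invQPoch_sub_one hq, hn]
  ring

lemma integral_cos_int_mul (k : ℤ) :
    ∫ θ in (0 : ℝ)..Real.pi, Real.cos (k * θ) = if k = 0 then Real.pi else 0 := by
  split_ifs with hk
  · simp [hk]
  · have hk' : (k : ℝ) ≠ 0 := by exact_mod_cast hk
    rw [intervalIntegral.integral_comp_mul_left (fun θ => Real.cos θ) hk']
    simp [Real.sin_int_mul_pi]

lemma two_mul_cos_mul_cos_int (k : ℤ) (θ : ℝ) :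
    2 * Real.cos θ * Real.cos (k * θ) =
      Real.cos ((k + 1 : ℤ) * θ) + Real.cos ((k - 1 : ℤ) * θ) := by
  push_cast
  rw [add_mul, sub_mul, one_mul, Real.cos_add, Real.cos_sub]
  ring

lemma integral_rogersH_mul_cos {q : ℝ} (hq : |q| < 1) (n : ℕ) (i j : ℤ) (hij : i + j = n) :
    ∫ θ in (0 : ℝ)..Real.pi, rogersH q n (2 * Real.cos θ) * Real.cos ((i - j : ℤ) * θ) =
      Real.pi * qPoch q q n * (invQPoch q i * invQPoch q j) := by
  have hcont : ∀ (n : ℕ) (k : ℤ), IntervalIntegrable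
      (fun θ => rogersH q n (2 * Real.cos θ) * Real.cos (k * θ)) volume 0 Real.pi := fun n k => by
    have := continuous_rogersH q n
    exact Continuous.intervalIntegrable (by fun_prop) _ _
  induction n using Nat.twoStepInduction generalizing i j with
  | zero =>
    obtain rfl : j = -i := by simp at hij; omega
    simp only [rogersH, one_mul, integral_cos_int_mul]
    split_ifs with h
    · obtain rfl : i = 0 := by omega
      simp [invQPoch_zero, qPoch]
    · rcases lt_or_ge i 0 with hi | hi
      · simp [invQPoch_of_neg q hi]
      · simp [invQPoch_of_neg q (show -i < 0 by omega)]
  | one =>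
    obtain rfl : j = 1 - i := by simp at hij; omega
    have h1 : 1 - q ≠ 0 := by simpa using (one_sub_pow_succ_pos hq 0).ne'
    have hinv : invQPoch q 1 = (1 - q)⁻¹ := by simpa [qPoch] using invQPoch_natCast q 1
    simp only [rogersH, two_mul_cos_mul_cos_int]
    rw [intervalIntegral.integral_add
      (Continuous.intervalIntegrable (by fun_prop) _ _)
      (Continuous.intervalIntegrable (by fun_prop) _ _),
      integral_cos_int_mul, integral_cos_int_mul]
    rcases lt_trichotomy i 0 with hi | rfl | hi
    · simp [invQPoch_of_neg q hi, show i - (1 - i) + 1 ≠ 0 by omega,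
        show i - (1 - i) - 1 ≠ 0 by omega]
    · simp [invQPoch_zero, hinv, qPoch, h1]
    · rcases eq_or_ne i 1 with rfl | h
      · simp [invQPoch_zero, hinv, qPoch, h1]
      · simp [invQPoch_of_neg q (show 1 - i < 0 by omega), show i - (1 - i) + 1 ≠ 0 by omega,
          show i - (1 - i) - 1 ≠ 0 by omega]
  | more n ih₀ ih₁ =>
    have hpt : ∀ θ : ℝ, rogersH q (n + 2) (2 * Real.cos θ) * Real.cos ((i - j : ℤ) * θ) =
        rogersH q (n + 1) (2 * Real.cos θ) * Real.cos ((i - (j - 1) : ℤ) * θ) +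
        rogersH q (n + 1) (2 * Real.cos θ) * Real.cos ((i - 1 - j : ℤ) * θ) -
        (1 - q ^ (n + 1)) *
          (rogersH q n (2 * Real.cos θ) * Real.cos ((i - 1 - (j - 1) : ℤ) * θ)) := fun θ => by
      have h := two_mul_cos_mul_cos_int (i - j) θ
      rw [show i - j + 1 = i - (j - 1) by ring, show i - j - 1 = i - 1 - j by ring] at h
      rw [rogersH_add_two, show i - 1 - (j - 1) = i - j by ring]
      linear_combination rogersH q (n + 1) (2 * Real.cos θ) * h
    simp only [hpt]
    rw [intervalIntegral.integral_sub ((hcont _ _).add (hcont _ _)) ((hcont _ _).const_mul _),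
      intervalIntegral.integral_add (hcont _ _) (hcont _ _), intervalIntegral.integral_const_mul,
      ih₁ i (j - 1) (by push_cast at hij ⊢; omega), ih₁ (i - 1) j (by push_cast at hij ⊢; omega),
      ih₀ (i - 1) (j - 1) (by push_cast at hij ⊢; omega)]
    have h := invQPoch_mul_invQPoch hq (n := n + 2) hij
    rw [qPoch_self_succ q (n + 1), qPoch_self_succ q n]
    linear_combination -(Real.pi * (qPoch q q n * (1 - q ^ (n + 1)))) * h

/-! ### Integrals against the truncated weight -/

/-- The first `M` factors of the weight function of the continuous q-Hermite polynomials. -/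
def truncWeight (q : ℝ) (M : ℕ) (x : ℝ) : ℝ :=
  ∏ j ∈ range M, ((1 + q ^ j) ^ 2 - q ^ j * x ^ 2)

/-- The value of `π⁻¹ ∫ rogersH q (2 m) · truncWeight q M`, a q-analogue of the super-Catalan
numbers. -/
def qSuperCatalan (q : ℝ) (M m : ℕ) : ℝ :=
  q ^ (M * m) * (qPoch q q (2 * m) / qPoch q q m) *
    (2 * qPoch q q (2 * M) / (qPoch q q M * (1 + q ^ M))) / qPoch q q (m + M)

lemma one_add_pow_ne_zero {q : ℝ} (hq : |q| < 1) (n : ℕ) : 1 + q ^ n ≠ 0 := by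
  cases n with
  | zero => norm_num
  | succ n => exact (one_add_pow_succ_pos hq n).ne'

lemma qPoch_two_mul_succ_div {q : ℝ} (hq : |q| < 1) (m : ℕ) :
    qPoch q q (2 * (m + 1)) / qPoch q q (m + 1) =
      qPoch q q (2 * m) / qPoch q q m * ((1 - q ^ (2 * m + 1)) * (1 + q ^ (m + 1))) := by
  have h1 := (one_sub_pow_succ_pos hq m).ne'
  have h2 := (qPoch_pos hq hq m).ne'
  rw [mul_add_one, qPoch_self_succ, qPoch_self_succ, qPoch_self_succ]
  field_simp
  ring

lemma qPoch_two_mul_succ_div_one_add {q : ℝ} (hq : |q| < 1) (M : ℕ) :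
    2 * qPoch q q (2 * (M + 1)) / (qPoch q q (M + 1) * (1 + q ^ (M + 1))) =
      2 * qPoch q q (2 * M) / (qPoch q q M * (1 + q ^ M)) *
        ((1 - q ^ (2 * M + 1)) * (1 + q ^ M)) := by
  have h1 := one_add_pow_ne_zero hq (M + 1)
  have h2 := one_add_pow_ne_zero hq M
  have h3 := (qPoch_pos hq hq M).ne'
  rw [mul_div_assoc, ← div_div, qPoch_two_mul_succ_div hq]
  field_simp

lemma qSuperCatalan_succ_zero {q : ℝ} (hq : |q| < 1) (M : ℕ) :
    qSuperCatalan q (M + 1) 0 =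
      ((1 + q ^ M) ^ 2 - q ^ M * (1 - q)) * qSuperCatalan q M 0 -
        q ^ M * qSuperCatalan q M 1 := by
  have h1 := (one_sub_pow_succ_pos hq M).ne'
  have h2 := (qPoch_pos hq hq M).ne'
  have h3 : 1 - q ≠ 0 := by simpa using (one_sub_pow_succ_pos hq 0).ne'
  have hC := qPoch_two_mul_succ_div hq 0
  rw [qSuperCatalan, qPoch_two_mul_succ_div_one_add hq]
  simp only [qSuperCatalan, add_comm 1 M, zero_add, mul_zero, mul_one, pow_zero, pow_one] at hC ⊢
  rw [hC]
  generalize 2 * qPoch q q (2 * M) / (qPoch q q M * (1 + q ^ M)) = D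
  have h0 : qPoch q q 0 = 1 := prod_range_zero _
  rw [h0, qPoch_self_succ]
  generalize qPoch q q M = P at *
  rw [show q ^ (2 * M + 1) = q ^ M * q ^ M * q by ring]
  rw [pow_succ] at h1 ⊢
  generalize q ^ M = Q at *
  obtain ⟨u, hu⟩ : ∃ u, u = 1 - Q * q := ⟨_, rfl⟩
  rw [← hu] at h1 ⊢
  field_simp
  rw [hu]
  ring

lemma qSuperCatalan_succ_succ {q : ℝ} (hq : |q| < 1) (M m : ℕ) :
    qSuperCatalan q (M + 1) (m + 1) =
      ((1 + q ^ M) ^ 2 - q ^ M * (2 - q ^ (2 * m + 2) - q ^ (2 * m + 3))) *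
          qSuperCatalan q M (m + 1) - q ^ M * qSuperCatalan q M (m + 2) -
        q ^ M * ((1 - q ^ (2 * m + 2)) * (1 - q ^ (2 * m + 1))) * qSuperCatalan q M m := by
  have h1 := (one_sub_pow_succ_pos hq (m + M)).ne'
  have h2 := (one_sub_pow_succ_pos hq (m + M + 1)).ne'
  have h3 := (qPoch_pos hq hq (m + M)).ne'
  simp only [qSuperCatalan, qPoch_two_mul_succ_div_one_add hq,
    show m + 2 = m + 1 + 1 by ring, qPoch_two_mul_succ_div hq,
    show m + 1 + (M + 1) = m + M + 1 + 1 by ring, show m + 1 + 1 + M = m + M + 1 + 1 by ring,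
    show m + 1 + M = m + M + 1 by ring, qPoch_self_succ q (m + M + 1), qPoch_self_succ q (m + M)]
  generalize 2 * qPoch q q (2 * M) / (qPoch q q M * (1 + q ^ M)) = D
  generalize qPoch q q (2 * m) / qPoch q q m = C
  generalize qPoch q q (m + M) = P at *
  rw [show q ^ ((M + 1) * (m + 1)) = q ^ (M * m) * q ^ M * q ^ m * q by ring,
    show q ^ (M * (m + 1 + 1)) = q ^ (M * m) * q ^ M * q ^ M by ring,
    show q ^ (M * (m + 1)) = q ^ (M * m) * q ^ M by ring,
    show q ^ (2 * M + 1) = q ^ M * q ^ M * q by ring,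
    show q ^ (2 * m + 1) = q ^ m * q ^ m * q by ring,
    show q ^ (2 * m + 2) = q ^ m * q ^ m * q ^ 2 by ring,
    show q ^ (2 * m + 3) = q ^ m * q ^ m * q ^ 3 by ring,
    show q ^ (2 * (m + 1) + 1) = q ^ m * q ^ m * q ^ 3 by ring,
    show q ^ (m + 1 + 1) = q ^ m * q ^ 2 by ring, show q ^ (m + 1) = q ^ m * q by ring]
  rw [show q ^ (m + M + 1) = q ^ m * q ^ M * q by ring] at h1 ⊢
  rw [show q ^ (m + M + 1 + 1) = q ^ m * q ^ M * q ^ 2 by ring] at h2 ⊢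
  generalize q ^ (M * m) = R
  generalize q ^ M = Q at *
  generalize q ^ m = p at *
  obtain ⟨u, hu⟩ : ∃ u, u = 1 - p * Q * q := ⟨_, rfl⟩
  obtain ⟨v, hv⟩ : ∃ v, v = 1 - p * Q * q ^ 2 := ⟨_, rfl⟩
  rw [← hu] at h1 ⊢
  rw [← hv] at h2 ⊢
  field_simp
  rw [hu, hv]
  ring

lemma sq_mul_rogersH_add_two (q x : ℝ) (n : ℕ) :
    x ^ 2 * rogersH q (n + 2) x = rogersH q (n + 4) x +
      (2 - q ^ (n + 2) - q ^ (n + 3)) * rogersH q (n + 2) x +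
      (1 - q ^ (n + 2)) * (1 - q ^ (n + 1)) * rogersH q n x := by
  have h1 := rogersH_add_two q x (n + 2)
  have h2 := rogersH_add_two q x (n + 1)
  have h3 := rogersH_add_two q x n
  simp only [add_assoc, Nat.reduceAdd] at h1 h2 h3
  linear_combination -h1 - x * h2 - (1 - q ^ (n + 2)) * h3

lemma continuous_truncWeight (q : ℝ) (M : ℕ) : Continuous (truncWeight q M) := by
  unfold truncWeight
  fun_prop

lemma integral_rogersH_mul_truncWeight {q : ℝ} (hq : |q| < 1) (M m : ℕ) :
    ∫ θ in (0 : ℝ)..Real.pi, rogersH q (2 * m) (2 * Real.cos θ) *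
        truncWeight q M (2 * Real.cos θ) = Real.pi * qSuperCatalan q M m := by
  have hint : ∀ n : ℕ, ∀ M : ℕ, IntervalIntegrable (fun θ => rogersH q n (2 * Real.cos θ) *
      truncWeight q M (2 * Real.cos θ)) volume 0 Real.pi := fun n M => by
    have := continuous_rogersH q n
    have := continuous_truncWeight q M
    exact Continuous.intervalIntegrable (by fun_prop) _ _
  induction M generalizing m with
  | zero =>
    have h := integral_rogersH_mul_cos hq (2 * m) m m (by push_cast; ring)
    simp only [sub_self, Int.cast_zero, zero_mul, Real.cos_zero] at h
    simp only [truncWeight, prod_range_zero, h, invQPoch_natCast, qSuperCatalan]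
    simp [qPoch]
    ring
  | succ M ih =>
    have hsucc : ∀ x, truncWeight q (M + 1) x =
        truncWeight q M x * ((1 + q ^ M) ^ 2 - q ^ M * x ^ 2) := fun x => prod_range_succ _ _
    cases m with
    | zero =>
      have hpt : ∀ x, rogersH q (2 * 0) x * truncWeight q (M + 1) x =
          ((1 + q ^ M) ^ 2 - q ^ M * (1 - q)) * (rogersH q (2 * 0) x * truncWeight q M x) -
            q ^ M * (rogersH q (2 * 1) x * truncWeight q M x) := fun x => by
        simp only [hsucc, rogersH]
        ring
      simp only [hpt]
      rw [intervalIntegral.integral_sub ((hint _ _).const_mul _) ((hint _ _).const_mul _),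
        intervalIntegral.integral_const_mul, intervalIntegral.integral_const_mul, ih, ih,
        qSuperCatalan_succ_zero hq]
      ring
    | succ m =>
      have hpt : ∀ x, rogersH q (2 * (m + 1)) x * truncWeight q (M + 1) x =
          ((1 + q ^ M) ^ 2 - q ^ M * (2 - q ^ (2 * m + 2) - q ^ (2 * m + 3))) *
              (rogersH q (2 * (m + 1)) x * truncWeight q M x) -
            q ^ M * (rogersH q (2 * (m + 2)) x * truncWeight q M x) -
            q ^ M * ((1 - q ^ (2 * m + 2)) * (1 - q ^ (2 * m + 1))) *
              (rogersH q (2 * m) x * truncWeight q M x) := fun x => by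
        rw [hsucc, show 2 * (m + 1) = 2 * m + 2 by ring, show 2 * (m + 2) = 2 * m + 4 by ring]
        linear_combination (-q ^ M * truncWeight q M x) * sq_mul_rogersH_add_two q x (2 * m)
      simp only [hpt]
      rw [intervalIntegral.integral_sub (((hint _ _).const_mul _).sub ((hint _ _).const_mul _))
          ((hint _ _).const_mul _),
        intervalIntegral.integral_sub ((hint _ _).const_mul _) ((hint _ _).const_mul _),
        intervalIntegral.integral_const_mul, intervalIntegral.integral_const_mul,
        intervalIntegral.integral_const_mul, ih, ih, ih, qSuperCatalan_succ_succ hq]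
      ring

/-! ### Orthogonality of the continuous q-Hermite polynomials -/

/-- The weight function of the continuous q-Hermite polynomials in the variable `x = 2 cos θ`,
relative to `dθ`. -/
def rogersWeight (q x : ℝ) : ℝ := ∏' j : ℕ, ((1 + q ^ j) ^ 2 - q ^ j * x ^ 2)

lemma abs_weight_factor_sub_one_le {q x : ℝ} (hq : |q| < 1) (j : ℕ) :
    |(1 + q ^ j) ^ 2 - q ^ j * x ^ 2 - 1| ≤ (3 + x ^ 2) * |q| ^ j := by
  have h1 : |q ^ j| ≤ 1 := by
    rw [abs_pow]
    exact pow_le_one₀ (abs_nonneg q) hq.le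
  have h2 : |2 + q ^ j - x ^ 2| ≤ 3 + x ^ 2 := by
    rw [abs_le] at h1 ⊢
    constructor <;> nlinarith [sq_nonneg x]
  rw [show (1 + q ^ j) ^ 2 - q ^ j * x ^ 2 - 1 = (2 + q ^ j - x ^ 2) * q ^ j by ring, abs_mul,
    ← abs_pow]
  exact mul_le_mul_of_nonneg_right h2 (abs_nonneg _)

lemma tendsto_truncWeight {q : ℝ} (hq : |q| < 1) (x : ℝ) :
    Tendsto (fun M => truncWeight q M x) atTop (𝓝 (rogersWeight q x)) := by
  have hs : Summable fun j : ℕ => ‖(1 + q ^ j) ^ 2 - q ^ j * x ^ 2 - 1‖ :=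
    Summable.of_nonneg_of_le (fun _ => norm_nonneg _) (abs_weight_factor_sub_one_le hq)
      ((summable_geometric_of_lt_one (abs_nonneg q) hq).mul_left (3 + x ^ 2))
  have h := (multipliable_one_add_of_summable hs).hasProd.tendsto_prod_nat
  simp only [add_sub_cancel] at h
  exact h

lemma exists_abs_truncWeight_le {q : ℝ} (hq : |q| < 1) :
    ∃ B, 0 ≤ B ∧ ∀ M : ℕ, ∀ x : ℝ, |x| ≤ 2 → |truncWeight q M x| ≤ B := by
  have hs : Summable fun j : ℕ => 7 * |q| ^ j :=
    (summable_geometric_of_lt_one (abs_nonneg q) hq).mul_left 7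
  refine ⟨Real.exp (∑' j : ℕ, 7 * |q| ^ j), (Real.exp_pos _).le, fun M x hx => ?_⟩
  have hx2 : x ^ 2 ≤ 4 := by nlinarith [abs_le.1 hx]
  rw [truncWeight, abs_prod]
  refine (prod_le_prod (fun j _ => abs_nonneg _) fun j _ => ?_).trans
    ((Real.prod_one_add_le_exp_sum (range M) (f := fun j => 7 * |q| ^ j)
      fun j => by positivity).trans
      (Real.exp_le_exp.2 (hs.sum_le_tsum _ fun j _ => by positivity)))
  have h1 := abs_weight_factor_sub_one_le (x := x) hq j
  have h2 : (3 + x ^ 2) * |q| ^ j ≤ 7 * |q| ^ j :=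
    mul_le_mul_of_nonneg_right (by linarith) (by positivity)
  have h3 := abs_add_le 1 ((1 + q ^ j) ^ 2 - q ^ j * x ^ 2 - 1)
  rw [add_sub_cancel, abs_one] at h3
  linarith

lemma abs_two_mul_cos_le (θ : ℝ) : |2 * Real.cos θ| ≤ 2 := by
  rw [abs_mul, abs_two]
  linarith [Real.abs_cos_le_one θ]

lemma exists_abs_rogersWeight_le {q : ℝ} (hq : |q| < 1) :
    ∃ B, 0 ≤ B ∧ ∀ x : ℝ, |x| ≤ 2 → |rogersWeight q x| ≤ B := by
  obtain ⟨B, hB, h⟩ := exists_abs_truncWeight_le hq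
  exact ⟨B, hB, fun x hx => le_of_tendsto' (tendsto_truncWeight hq x).abs fun M => h M x hx⟩

lemma measurable_rogersWeight {q : ℝ} (hq : |q| < 1) : Measurable (rogersWeight q) :=
  measurable_of_tendsto_metrizable (fun M => (continuous_truncWeight q M).measurable)
    (tendsto_pi_nhds.2 (tendsto_truncWeight hq))

lemma measurable_rogersWeight_cos {q : ℝ} (hq : |q| < 1) :
    Measurable fun θ : ℝ => rogersWeight q (2 * Real.cos θ) :=
  (measurable_rogersWeight hq).comp (by fun_prop)

lemma intervalIntegrable_mul_rogersWeight {q : ℝ} (hq : |q| < 1) {g : ℝ → ℝ} (hg : Continuous g) :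
    IntervalIntegrable (fun θ => g θ * rogersWeight q (2 * Real.cos θ)) volume 0 Real.pi := by
  obtain ⟨B, -, hB⟩ := exists_abs_rogersWeight_le hq
  refine IntervalIntegrable.continuousOn_mul ?_ hg.continuousOn
  exact (intervalIntegrable_const (c := B)).mono_fun
    (measurable_rogersWeight_cos hq).aestronglyMeasurable
    (Eventually.of_forall fun θ => (hB _ (abs_two_mul_cos_le θ)).trans (le_abs_self B))

lemma tendsto_integral_truncWeight {q : ℝ} (hq : |q| < 1) (n : ℕ) :
    Tendsto (fun M => ∫ θ in (0 : ℝ)..Real.pi, rogersH q n (2 * Real.cos θ) *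
        truncWeight q M (2 * Real.cos θ)) atTop
      (𝓝 (∫ θ in (0 : ℝ)..Real.pi, rogersH q n (2 * Real.cos θ) *
        rogersWeight q (2 * Real.cos θ))) := by
  obtain ⟨B, -, hB⟩ := exists_abs_truncWeight_le hq
  have hc := continuous_rogersH q n
  refine intervalIntegral.tendsto_integral_filter_of_dominated_convergence
    (fun θ => |rogersH q n (2 * Real.cos θ)| * B) (Eventually.of_forall fun M => ?_)
    (Eventually.of_forall fun M => Eventually.of_forall fun θ _ => ?_)
    (Continuous.intervalIntegrable (by fun_prop) _ _)
    (Eventually.of_forall fun θ _ => (tendsto_truncWeight hq _).const_mul _)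
  · have := continuous_truncWeight q M
    exact Continuous.aestronglyMeasurable (by fun_prop)
  · rw [norm_mul]
    exact mul_le_mul_of_nonneg_left (hB M _ (abs_two_mul_cos_le θ)) (norm_nonneg _)

lemma tendsto_qSuperCatalan {q : ℝ} (hq : |q| < 1) (m : ℕ) :
    Tendsto (fun M => qSuperCatalan q M m) atTop
      (𝓝 (if m = 0 then 2 / qPochInf q q else 0)) := by
  have hne := qPochInf_ne_zero hq hq
  have hP := tendsto_qPoch q hq
  have hpow := tendsto_pow_atTop_nhds_zero_of_abs_lt_one hq
  have h1 : Tendsto (fun M => 2 * qPoch q q (2 * M) / (qPoch q q M * (1 + q ^ M))) atTop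
      (𝓝 (2 * qPochInf q q / (qPochInf q q * (1 + 0)))) :=
    ((hP.comp (tendsto_id.const_mul_atTop' two_pos)).const_mul 2).div
      (hP.mul (hpow.const_add 1)) (by simpa using hne)
  have h2 : Tendsto (fun M => qPoch q q (m + M)) atTop (𝓝 (qPochInf q q)) :=
    hP.comp (tendsto_add_atTop_nat m |>.congr fun M => add_comm M m)
  have h3 : Tendsto (fun M : ℕ => q ^ (M * m)) atTop (𝓝 (if m = 0 then 1 else 0)) := by
    split_ifs with hm
    · simp [hm]
    · simpa [pow_mul, hm] using hpow.pow m
  have h := ((h3.mul_const (qPoch q q (2 * m) / qPoch q q m)).mul h1).div h2 hne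
  convert h using 2
  · rfl
  split_ifs with hm
  · subst hm
    simp [qPoch]
    field_simp
  · simp

lemma integral_rogersH_mul_rogersWeight {q : ℝ} (hq : |q| < 1) (n : ℕ) :
    ∫ θ in (0 : ℝ)..Real.pi, rogersH q n (2 * Real.cos θ) * rogersWeight q (2 * Real.cos θ) =
      if n = 0 then 2 * Real.pi / qPochInf q q else 0 := by
  rcases Nat.even_or_odd' n with ⟨m, rfl | rfl⟩
  · refine tendsto_nhds_unique (tendsto_integral_truncWeight hq _) ?_
    simp only [integral_rogersH_mul_truncWeight hq]
    convert (tendsto_qSuperCatalan hq m).const_mul Real.pi using 2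
    split_ifs <;> first | omega | ring
  · have h := intervalIntegral.integral_comp_sub_left (a := 0) (b := Real.pi)
      (fun θ => rogersH q (2 * m + 1) (2 * Real.cos θ) * rogersWeight q (2 * Real.cos θ)) Real.pi
    have hw : ∀ x, rogersWeight q (-x) = rogersWeight q x := fun x => by
      simp only [rogersWeight, neg_sq]
    simp only [Real.cos_pi_sub, mul_neg, rogersH_neg, hw, sub_self, sub_zero,
      Odd.neg_one_pow ⟨m, rfl⟩, one_mul, neg_mul, intervalIntegral.integral_neg] at h
    rw [if_neg (by omega)]
    linarith

/-- Orthogonality of the continuous q-Hermite polynomials. -/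
lemma integral_rogersH_mul_rogersH {q : ℝ} (hq : |q| < 1) (m n : ℕ) :
    ∫ θ in (0 : ℝ)..Real.pi, rogersH q m (2 * Real.cos θ) * rogersH q n (2 * Real.cos θ) *
        rogersWeight q (2 * Real.cos θ) =
      if m = n then 2 * Real.pi / qPochInf q q * qPoch q q n else 0 := by
  have hint : ∀ m n : ℕ, IntervalIntegrable (fun θ => rogersH q m (2 * Real.cos θ) *
      rogersH q n (2 * Real.cos θ) * rogersWeight q (2 * Real.cos θ)) volume 0 Real.pi :=
    fun m n => by
      have := continuous_rogersH q m
      have := continuous_rogersH q n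
      exact intervalIntegrable_mul_rogersWeight hq (by fun_prop)
  induction m using Nat.strong_induction_on generalizing n with
  | _ m ih =>
  rcases m with _ | m
  · simp only [rogersH, one_mul, integral_rogersH_mul_rogersWeight hq, eq_comm (a := 0)]
    split_ifs with h
    · simp [h, qPoch]
    · rfl
  · have hpt : ∀ x, rogersH q (m + 1) x * rogersH q n x * rogersWeight q x =
        rogersH q m x * rogersH q (n + 1) x * rogersWeight q x +
        (1 - q ^ n) * (rogersH q m x * rogersH q (n - 1) x * rogersWeight q x) -
        (1 - q ^ m) * (rogersH q (m - 1) x * rogersH q n x * rogersWeight q x) := fun x => by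
      linear_combination (rogersH q m x * rogersWeight q x) * mul_rogersH q x n -
        (rogersH q n x * rogersWeight q x) * mul_rogersH q x m
    simp only [hpt]
    rw [intervalIntegral.integral_sub ((hint _ _).add ((hint _ _).const_mul _))
        ((hint _ _).const_mul _),
      intervalIntegral.integral_add (hint _ _) ((hint _ _).const_mul _),
      intervalIntegral.integral_const_mul, intervalIntegral.integral_const_mul,
      ih m (by omega), ih m (by omega), ih (m - 1) (by omega)]
    have hP := qPoch_self_succ q
    generalize 2 * Real.pi / qPochInf q q = K
    rcases n with _ | n
    · rcases m with _ | m
      · simp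
      · rcases m with _ | m
        · simp [hP]
          ring
        · simp
    · rcases eq_or_ne m (n + 2) with rfl | h1
      · simp [hP]
        ring
      · rcases eq_or_ne m n with rfl | h2
        · have h3 : ¬ m - 1 = m + 1 := by omega
          rw [if_neg h1, if_neg h3, if_pos (Nat.add_sub_cancel m 1).symm, if_pos rfl,
            Nat.add_sub_cancel, hP]
          ring
        · have h3 : ¬ m - 1 = n + 1 := by omega
          simp [h1, h2, h3]

/-! ### The conditional expectation of a q-Hermite polynomial -/

lemma integral_rogersH_mul_mehlerKernel {q ρ Y : ℝ} (hq : |q| < 1) (hρ : |ρ| < 1) (hY : |Y| ≤ 2)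
    (m : ℕ) :
    ∫ θ in (0 : ℝ)..Real.pi, rogersH q m (2 * Real.cos θ) *
        (qPochInf (ρ ^ 2) q / ∏' k : ℕ, mehlerFactor (2 * Real.cos θ) Y (ρ * q ^ k)) *
        rogersWeight q (2 * Real.cos θ) =
      2 * Real.pi / qPochInf q q * (ρ ^ m * rogersH q m Y) := by
  obtain ⟨B, hB0, hB⟩ := exists_abs_rogersWeight_le hq
  obtain ⟨C, hC0, hC⟩ := exists_abs_rogersH_le hq
  obtain ⟨D, hD0, hD⟩ := exists_abs_mehlerCoeff_le hq
  have hterm : ∀ n θ, rogersH q m (2 * Real.cos θ) *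
      (mehlerCoeff q (2 * Real.cos θ) Y n * ρ ^ n) * rogersWeight q (2 * Real.cos θ) =
      rogersH q n Y / qPoch q q n * ρ ^ n * (rogersH q m (2 * Real.cos θ) *
        rogersH q n (2 * Real.cos θ) * rogersWeight q (2 * Real.cos θ)) := fun n θ => by
    rw [mehlerCoeff]
    ring
  have hsum := intervalIntegral.hasSum_integral_of_dominated_convergence
    (μ := volume) (a := 0) (b := Real.pi)
    (F := fun n θ => rogersH q m (2 * Real.cos θ) *
      (mehlerCoeff q (2 * Real.cos θ) Y n * ρ ^ n) * rogersWeight q (2 * Real.cos θ))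
    (f := fun θ => rogersH q m (2 * Real.cos θ) *
      (qPochInf (ρ ^ 2) q / ∏' k : ℕ, mehlerFactor (2 * Real.cos θ) Y (ρ * q ^ k)) *
      rogersWeight q (2 * Real.cos θ))
    (fun n _ => C * (m + 1) * (D * (((n : ℝ) + 1) ^ 2 * |ρ| ^ n)) * B)
    (fun n => ?_) (fun n => Eventually.of_forall fun θ _ => ?_)
    (Eventually.of_forall fun θ _ =>
      (((summable_add_one_pow_mul_pow 2 hρ).mul_left D).mul_left _).mul_right B)
    intervalIntegrable_const
    (Eventually.of_forall fun θ _ =>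
      ((hasSum_mehler hq (abs_two_mul_cos_le θ) hY hρ).mul_left _).mul_right _)
  · refine hsum.unique ?_
    simp only [hterm, intervalIntegral.integral_const_mul, integral_rogersH_mul_rogersH hq]
    convert hasSum_single m fun n hn => ?_ using 1
    · have := (qPoch_pos hq hq m).ne'
      rw [if_pos rfl]
      field_simp
    · rw [if_neg hn.symm, mul_zero]
  · have hm := continuous_rogersH q m
    have hn := continuous_rogersH q n
    simp only [hterm]
    exact (Continuous.aestronglyMeasurable (by fun_prop)).mul
      ((Continuous.aestronglyMeasurable (by fun_prop)).mul
        (measurable_rogersWeight_cos hq).aestronglyMeasurable)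
  · have hθ := abs_two_mul_cos_le θ
    rw [norm_mul, norm_mul, norm_mul, norm_pow, ← mul_assoc D]
    simp only [Real.norm_eq_abs]
    gcongr
    · exact hC m _ hθ
    · exact hD n _ _ hθ hY
    · exact hB _ hθ

lemma image_two_mul_cos_div_Ioo {s : ℝ} (hs : 0 < s) :
    (fun θ => 2 * Real.cos θ / s) '' Set.Ioo 0 Real.pi = Set.Ioo (-(2 / s)) (2 / s) := by
  ext x
  constructor
  · rintro ⟨θ, hθ, rfl⟩
    have h1 : Real.cos θ < 1 := by
      simpa using Real.strictAntiOn_cos ⟨le_rfl, Real.pi_pos.le⟩ ⟨hθ.1.le, hθ.2.le⟩ hθ.1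
    have h2 : -1 < Real.cos θ := by
      simpa using Real.strictAntiOn_cos ⟨hθ.1.le, hθ.2.le⟩ ⟨Real.pi_pos.le, le_rfl⟩ hθ.2
    rw [Set.mem_Ioo, ← neg_div, div_lt_div_iff_of_pos_right hs, div_lt_div_iff_of_pos_right hs]
    constructor <;> linarith
  · rintro ⟨h1, h2⟩
    rw [← neg_div, div_lt_iff₀ hs] at h1
    rw [lt_div_iff₀ hs] at h2
    refine ⟨Real.arccos (x * s / 2), ⟨Real.arccos_pos.2 (by linarith), ?_⟩, ?_⟩
    · refine lt_of_le_of_ne (Real.arccos_le_pi _) fun h => ?_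
      have := Real.arccos_eq_pi.1 h
      linarith
    · simp only
      rw [Real.cos_arccos (by linarith) (by linarith)]
      field_simp

lemma setIntegral_Icc_eq_integral_cos {s : ℝ} (hs : 0 < s) (g : ℝ → ℝ) :
    ∫ x in Set.Icc (-(2 / s)) (2 / s), g x =
      ∫ θ in Set.Ioo 0 Real.pi, 2 * Real.sin θ / s * g (2 * Real.cos θ / s) := by
  rw [integral_Icc_eq_integral_Ioo, ← image_two_mul_cos_div_Ioo hs,
    integral_image_eq_integral_abs_deriv_smul (f' := fun θ => 2 * -Real.sin θ / s)
      measurableSet_Ioo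
      (fun θ _ => (((Real.hasDerivAt_cos θ).const_mul 2).div_const s).hasDerivWithinAt)]
  · refine setIntegral_congr_fun measurableSet_Ioo fun θ hθ => ?_
    have hsin := Real.sin_pos_of_mem_Ioo hθ
    have h : |2 * -Real.sin θ / s| = 2 * Real.sin θ / s := by
      rw [mul_neg, neg_div, abs_neg, abs_of_pos (by positivity)]
    simp only [h, smul_eq_mul]
  · intro a ha b hb hab
    refine Real.injOn_cos ⟨ha.1.le, ha.2.le⟩ ⟨hb.1.le, hb.2.le⟩ ?_
    simp only at hab
    field_simp at hab
    exact hab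

lemma Lk_one_eq {q s : ℝ} (hs : s ^ 2 = 1 - q) (x : ℝ) (j : ℕ) :
    Lk q x 1 j = (1 + q ^ j) ^ 2 - q ^ j * (s * x) ^ 2 := by
  rw [Lk, ← hs]
  ring

lemma Wk_eq_mehlerFactor {q s : ℝ} (hs : s ^ 2 = 1 - q) (x y t : ℝ) (k : ℕ) :
    Wk q x y t k = mehlerFactor (s * x) (s * y) (t * q ^ k) := by
  rw [Wk, mehlerFactor, ← hs]
  ring

lemma sin_mul_fCN_eq {q s : ℝ} (hs0 : 0 < s) (hs : s ^ 2 = 1 - q) (y ρ : ℝ) {θ : ℝ}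
    (hθ : θ ∈ Set.Ioo 0 Real.pi) :
    2 * Real.sin θ / s * fCN q y ρ (2 * Real.cos θ / s) =
      qPochInf q q / (2 * Real.pi) *
        (qPochInf (ρ ^ 2) q / ∏' k : ℕ, mehlerFactor (2 * Real.cos θ) (s * y) (ρ * q ^ k)) *
        rogersWeight q (2 * Real.cos θ) := by
  have hsqrt : √(1 - q) = s := by rw [← hs, Real.sqrt_sq hs0.le]
  have hsin := Real.sin_pos_of_mem_Ioo hθ
  have hx : s * (2 * Real.cos θ / s) = 2 * Real.cos θ := by field_simp
  have hmem : 2 * Real.cos θ / s ∈ Sq q := by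
    rw [Sq, hsqrt]
    exact Set.Ioo_subset_Icc_self
      ((image_two_mul_cos_div_Ioo hs0).subset (Set.mem_image_of_mem _ hθ))
  have hL0 : √(Lk q (2 * Real.cos θ / s) 1 0) = 2 * Real.sin θ := by
    rw [Lk_one_eq hs, hx, ← Real.sqrt_sq (by positivity : 0 ≤ 2 * Real.sin θ)]
    congr 1
    linear_combination -4 * Real.sin_sq_add_cos_sq θ
  have hL : ∏' j : ℕ, Lk q (2 * Real.cos θ / s) 1 j = rogersWeight q (2 * Real.cos θ) := by
    simp only [Lk_one_eq hs, hx, rogersWeight]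
  rw [fCN, fN, if_pos hmem, hL0, hsqrt, hL]
  simp only [Wk_eq_mehlerFactor hs, hx]
  field_simp

/-- `∫_{S(q)} H_n(x|q)·f_CN(x|y,ρ,q) dx = ρⁿ·H_n(y|q)`. -/
theorem integral_qHermite_fCN (q ρ y : ℝ) (hq : |q| < 1) (hρ : |ρ| < 1) (hy : y ∈ Sq q)
    (n : ℕ) (hn : 1 ≤ n) :
    ∫ x in Sq q, qHermite q n x * fCN q y ρ x = ρ ^ n * qHermite q n y := by
  have hq1 : 0 < 1 - q := by linarith [(abs_lt.1 hq).2]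
  obtain ⟨s, hs0, hsqrt⟩ : ∃ s, 0 < s ∧ √(1 - q) = s := ⟨_, Real.sqrt_pos.2 hq1, rfl⟩
  have hs : s ^ 2 = 1 - q := by rw [← hsqrt, Real.sq_sqrt hq1.le]
  have hY : |s * y| ≤ 2 := by
    rw [Sq, hsqrt, Set.mem_Icc, ← abs_le, le_div_iff₀ hs0] at hy
    rwa [abs_mul, abs_of_pos hs0, mul_comm]
  have hP := qPochInf_ne_zero hq hq
  have hpt : ∀ θ ∈ Set.Ioo 0 Real.pi, 2 * Real.sin θ / s *
      (qHermite q n (2 * Real.cos θ / s) * fCN q y ρ (2 * Real.cos θ / s)) =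
      qPochInf q q / (2 * Real.pi) / s ^ n * (rogersH q n (2 * Real.cos θ) *
        (qPochInf (ρ ^ 2) q / ∏' k : ℕ, mehlerFactor (2 * Real.cos θ) (s * y) (ρ * q ^ k)) *
        rogersWeight q (2 * Real.cos θ)) := fun θ hθ => by
    have hH := rogersH_mul_eq_pow_mul_qHermite hs (2 * Real.cos θ / s) n
    rw [mul_div_cancel₀ _ hs0.ne'] at hH
    rw [mul_left_comm, sin_mul_fCN_eq hs0 hs y ρ hθ, hH]
    generalize qPochInf (ρ ^ 2) q / ∏' k : ℕ, mehlerFactor _ _ _ = W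
    field_simp
  rw [Sq, hsqrt, setIntegral_Icc_eq_integral_cos hs0, setIntegral_congr_fun measurableSet_Ioo hpt,
    integral_const_mul, ← integral_Ioc_eq_integral_Ioo,
    ← intervalIntegral.integral_of_le Real.pi_pos.le, integral_rogersH_mul_mehlerKernel hq hρ hY,
    rogersH_mul_eq_pow_mul_qHermite hs]
  field_simp
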